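/- Fix r ∈ (0,1), a unit vector x ∈ ℝ^d, and for each m ≥ 2 let k_m := Σ_{i=1}^m 1[⟨a_i,x⟩ ≥ h_m] be the number of nonzero entries of the mapped vector. Then E[k_m] = m·(1 - Φ(sqrt(2 r log m))), E[k_m] ≤ m^{1-r}/sqrt(4π r log m) for every m ≥ 2, and E[k_m] ~ m^{1-r}/sqrt(4π r log m) as m → ∞. -/

import Mathlib

open MeasureTheory ProbabilityTheory Filter Topology

noncomputable section

/-- Centered bivariate Gaussian pair `(w, v)` in which `w` and `v` are each standard
normal and `E[w v] = lam`, realized as the law of `(z₁, lam·z₁ + √(1-lam²)·z₂)`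
for independent standard normals `z₁, z₂`. -/
def gaussPair (lam : ℝ) : Measure (ℝ × ℝ) :=
  Measure.map (fun z : ℝ × ℝ => (z.1, lam * z.1 + Real.sqrt (1 - lam ^ 2) * z.2))
    ((gaussianReal 0 1).prod (gaussianReal 0 1))

/-- `μ(λ,h) = P(w ≥ h ∧ v ≥ h)`. -/
def mu (lam h : ℝ) : ℝ := (gaussPair lam {p : ℝ × ℝ | h ≤ p.1 ∧ h ≤ p.2}).toReal

/-- `σ(λ,h) = sqrt(μ(λ,h)(1-μ(λ,h)))`. -/
def sigma' (lam h : ℝ) : ℝ := Real.sqrt (mu lam h * (1 - mu lam h))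

/-- The threshold `h_m = sqrt(2 r log m)`. -/
def hthr (r : ℝ) (m : ℕ) : ℝ := Real.sqrt (2 * r * Real.log m)

/-- `μ_m(λ) = μ(λ, h_m)`. -/
def muM (r : ℝ) (m : ℕ) (lam : ℝ) : ℝ := mu lam (hthr r m)

/-- `σ_m(λ) = σ(λ, h_m)`. -/
def sigM (r : ℝ) (m : ℕ) (lam : ℝ) : ℝ := sigma' lam (hthr r m)

/-- Canonical probability space carrying `m` i.i.d. random vectors in `ℝ^d`
whose coordinates are i.i.d. standard normal: `a_i ω := ω i`. -/
def Prob (d m : ℕ) : Measure (Fin m → Fin d → ℝ) :=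
  Measure.pi fun _ => Measure.pi fun _ : Fin d => gaussianReal 0 1

/-- Euclidean inner product on `ℝ^d`. -/
def dotp {d : ℕ} (a x : Fin d → ℝ) : ℝ := ∑ j, a j * x j

/-- `x` lies on the unit sphere `S^{d-1}`. -/
def unitVec {d : ℕ} (x : Fin d → ℝ) : Prop := ∑ j, x j ^ 2 = 1

/-- The score `S_m(x,y) = (1/m) ∑_i 1[⟨a_i,x⟩ ≥ h_m]·1[⟨a_i,y⟩ ≥ h_m]`. -/
def score (d m : ℕ) (r : ℝ) (x y : Fin d → ℝ) (ω : Fin m → Fin d → ℝ) : ℝ :=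
  (1 / (m : ℝ)) * ∑ i, (if hthr r m ≤ dotp (ω i) x then (1 : ℝ) else 0) *
    (if hthr r m ≤ dotp (ω i) y then (1 : ℝ) else 0)

/-- The standard normal cumulative distribution function `Φ`. -/
def Phi (t : ℝ) : ℝ := (gaussianReal 0 1 (Set.Iic t)).toReal

/-- The standard normal upper tail `P(N(0,1) ≥ t)`. -/
def gaussTail (t : ℝ) : ℝ := (gaussianReal 0 1 {z : ℝ | t ≤ z}).toReal

/-! Each `⟨aᵢ, x⟩` is standard normal, so by linearity `E[k_m] = m · P(Z ≥ h_m)` for a standard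
normal `Z`. For a Gaussian density `φ` with mean `μ` and variance `v` one has
`φ' = -(z - μ) φ / v`, hence `z ↦ -v φ z / (z - μ)` is a primitive of `(1 + v / (z - μ)²) φ z`.
Integrating over `(t, ∞)` with `t > μ` gives
`P(Z ≥ t) ≤ v φ t / (t - μ) ≤ (1 + v / (t - μ)²) P(Z ≥ t)` for `Z ∼ N(μ, v)`, so the middle term is
both an upper bound and an asymptotic equivalent of the tail. The threshold `h_m` is chosen so that
the standard normal density takes the value `m⁻ʳ / √(2π)` there. -/

section GaussianPDF

open Asymptotics
open scoped NNReal

variable {μ t : ℝ} {v : ℝ≥0}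

lemma hasDerivAt_gaussianPDFReal (μ : ℝ) (v : ℝ≥0) (z : ℝ) :
    HasDerivAt (gaussianPDFReal μ v) (-((z - μ) / v) * gaussianPDFReal μ v z) z := by
  have h_exponent : HasDerivAt (fun z : ℝ ↦ -(z - μ) ^ 2 / (2 * v)) (-((z - μ) / v)) z := by
    refine ((((hasDerivAt_id z).sub_const μ).pow 2).neg.div_const (2 * (v : ℝ))).congr_deriv ?_
    simp only [id, Nat.cast_ofNat, Nat.add_one_sub_one, pow_one, mul_one]
    rw [neg_div, mul_div_mul_left _ _ two_ne_zero]
  rw [gaussianPDFReal_def]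
  exact (h_exponent.exp.const_mul _).congr_deriv (by ring)

lemma gaussianPDFReal_le_inv_sqrt (μ : ℝ) (v : ℝ≥0) (z : ℝ) :
    gaussianPDFReal μ v z ≤ (√(2 * Real.pi * v))⁻¹ := by
  refine mul_le_of_le_one_right (by positivity) (Real.exp_le_one_iff.mpr ?_)
  exact div_nonpos_of_nonpos_of_nonneg (neg_nonpos.mpr (sq_nonneg _)) (by positivity)

lemma tendsto_gaussianPDFReal_div_sub_atTop (μ : ℝ) (v : ℝ≥0) :
    Tendsto (fun z ↦ gaussianPDFReal μ v z / (z - μ)) atTop (𝓝 0) := by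
  have h_sub : Tendsto (fun z : ℝ ↦ z - μ) atTop atTop :=
    tendsto_atTop_add_const_right _ _ tendsto_id
  refine squeeze_zero' ?_ ?_ (h_sub.const_div_atTop (√(2 * Real.pi * v))⁻¹)
  all_goals filter_upwards [h_sub.eventually_ge_atTop 0] with z hz
  · exact div_nonneg (gaussianPDFReal_nonneg μ v z) hz
  · exact div_le_div_of_nonneg_right (gaussianPDFReal_le_inv_sqrt μ v z) hz

lemma hasDerivAt_neg_mul_gaussianPDFReal_div_sub (hv : v ≠ 0) {z : ℝ} (hz : z ≠ μ) :
    HasDerivAt (fun z ↦ -(v * (gaussianPDFReal μ v z / (z - μ))))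
      ((1 + v / (z - μ) ^ 2) * gaussianPDFReal μ v z) z := by
  have hz' : z - μ ≠ 0 := sub_ne_zero.mpr hz
  refine (((hasDerivAt_gaussianPDFReal μ v z).div ((hasDerivAt_id z).sub_const μ) hz').const_mul
    (v : ℝ)).neg.congr_deriv ?_
  simp only [id]
  field_simp
  ring

lemma one_add_div_sq_mul_gaussianPDFReal_nonneg (μ : ℝ) (v : ℝ≥0) (z : ℝ) :
    0 ≤ (1 + v / (z - μ) ^ 2) * gaussianPDFReal μ v z :=
  mul_nonneg (by positivity) (gaussianPDFReal_nonneg μ v z)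

lemma tendsto_neg_mul_gaussianPDFReal_div_sub_atTop (μ : ℝ) (v : ℝ≥0) :
    Tendsto (fun z ↦ -(v * (gaussianPDFReal μ v z / (z - μ)))) atTop (𝓝 0) := by
  simpa using ((tendsto_gaussianPDFReal_div_sub_atTop μ v).const_mul (v : ℝ)).neg

lemma integrableOn_Ioi_one_add_div_sq_mul_gaussianPDFReal (hv : v ≠ 0) (ht : μ < t) :
    IntegrableOn (fun z ↦ (1 + v / (z - μ) ^ 2) * gaussianPDFReal μ v z) (Set.Ioi t) :=
  integrableOn_Ioi_deriv_of_nonneg'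
    (fun _ hz ↦ hasDerivAt_neg_mul_gaussianPDFReal_div_sub hv (ht.trans_le hz).ne')
    (fun z _ ↦ one_add_div_sq_mul_gaussianPDFReal_nonneg μ v z)
    (tendsto_neg_mul_gaussianPDFReal_div_sub_atTop μ v)

lemma integral_Ioi_one_add_div_sq_mul_gaussianPDFReal (hv : v ≠ 0) (ht : μ < t) :
    ∫ z in Set.Ioi t, (1 + v / (z - μ) ^ 2) * gaussianPDFReal μ v z
      = v * (gaussianPDFReal μ v t / (t - μ)) := by
  rw [integral_Ioi_of_hasDerivAt_of_nonneg'
    (fun _ hz ↦ hasDerivAt_neg_mul_gaussianPDFReal_div_sub hv (ht.trans_le hz).ne')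
    (fun z _ ↦ one_add_div_sq_mul_gaussianPDFReal_nonneg μ v z)
    (tendsto_neg_mul_gaussianPDFReal_div_sub_atTop μ v), zero_sub, neg_neg]

lemma gaussianReal_real_Ici_eq_integral (hv : v ≠ 0) (t : ℝ) :
    (gaussianReal μ v).real (Set.Ici t) = ∫ z in Set.Ioi t, gaussianPDFReal μ v z := by
  rw [measureReal_def, gaussianReal_apply_eq_integral μ hv,
    ENNReal.toReal_ofReal (integral_nonneg (gaussianPDFReal_nonneg μ v)),
    integral_Ici_eq_integral_Ioi]

lemma gaussianReal_real_Ici_le (hv : v ≠ 0) (ht : μ < t) :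
    (gaussianReal μ v).real (Set.Ici t) ≤ v * (gaussianPDFReal μ v t / (t - μ)) := by
  rw [gaussianReal_real_Ici_eq_integral hv, ← integral_Ioi_one_add_div_sq_mul_gaussianPDFReal hv ht]
  refine setIntegral_mono_on (integrable_gaussianPDFReal μ v).integrableOn
    (integrableOn_Ioi_one_add_div_sq_mul_gaussianPDFReal hv ht) measurableSet_Ioi fun z _ ↦ ?_
  exact le_mul_of_one_le_left (gaussianPDFReal_nonneg μ v z)
    (le_add_of_nonneg_right (by positivity))

lemma mul_gaussianPDFReal_div_sub_le (hv : v ≠ 0) (ht : μ < t) :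
    v * (gaussianPDFReal μ v t / (t - μ))
      ≤ (1 + v / (t - μ) ^ 2) * (gaussianReal μ v).real (Set.Ici t) := by
  rw [gaussianReal_real_Ici_eq_integral hv, ← integral_Ioi_one_add_div_sq_mul_gaussianPDFReal hv ht,
    ← integral_const_mul]
  refine setIntegral_mono_on (integrableOn_Ioi_one_add_div_sq_mul_gaussianPDFReal hv ht)
    ((integrable_gaussianPDFReal μ v).integrableOn.const_mul _) measurableSet_Ioi fun z hz ↦ ?_
  have : 0 < t - μ := sub_pos.mpr ht
  have htz : t ≤ z := le_of_lt hz
  gcongr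
  exact gaussianPDFReal_nonneg μ v z

lemma isEquivalent_gaussianReal_real_Ici (μ : ℝ) (hv : v ≠ 0) :
    (fun t ↦ (gaussianReal μ v).real (Set.Ici t))
      ~[atTop] fun t ↦ v * (gaussianPDFReal μ v t / (t - μ)) := by
  have h_sub : Tendsto (fun t : ℝ ↦ t - μ) atTop atTop :=
    tendsto_atTop_add_const_right _ _ tendsto_id
  have h_lower : Tendsto (fun t : ℝ ↦ (1 + v / (t - μ) ^ 2)⁻¹) atTop (𝓝 1) := by
    have h_sq := (tendsto_pow_atTop two_ne_zero).comp h_sub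
    simpa using ((h_sq.const_div_atTop (v : ℝ)).const_add 1).inv₀ (by norm_num)
  have h_pos : ∀ t, μ < t → 0 < v * (gaussianPDFReal μ v t / (t - μ)) := fun t ht ↦
    mul_pos (NNReal.coe_pos.mpr (pos_iff_ne_zero.mpr hv))
      (div_pos (gaussianPDFReal_pos μ v t hv) (sub_pos.mpr ht))
  refine isEquivalent_of_tendsto_one
    (tendsto_of_tendsto_of_tendsto_of_le_of_le' h_lower tendsto_const_nhds ?_ ?_)
  all_goals filter_upwards [eventually_gt_atTop μ] with t ht
  · rw [Pi.div_apply, le_div_iff₀ (h_pos t ht), inv_mul_le_iff₀ (by positivity)]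
    exact mul_gaussianPDFReal_div_sub_le hv ht
  · exact div_le_one_of_le₀ (gaussianReal_real_Ici_le hv ht) (h_pos t ht).le

end GaussianPDF

section ProductMeasure

open scoped NNReal

variable {ι : Type*} [Fintype ι]

lemma map_sum_pi_gaussianReal (μ : ι → ℝ) (v : ι → ℝ≥0) :
    (Measure.pi fun i ↦ gaussianReal (μ i) (v i)).map (fun a ↦ ∑ i, a i)
      = gaussianReal (∑ i, μ i) (∑ i, v i) := by
  refine Measure.ext_of_charFun (funext fun t ↦ ?_)
  rw [charFun_map_sum_pi_eq_prod, Finset.prod_apply]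
  simp_rw [charFun_gaussianReal]
  rw [← Complex.exp_sum]
  push_cast
  rw [Finset.sum_sub_distrib, Finset.mul_sum, Finset.sum_mul, Finset.sum_mul, Finset.sum_div]

lemma map_sum_mul_pi_gaussianReal (μ : ι → ℝ) (v : ι → ℝ≥0) (c : ι → ℝ) :
    (Measure.pi fun i ↦ gaussianReal (μ i) (v i)).map (fun a ↦ ∑ i, a i * c i)
      = gaussianReal (∑ i, c i * μ i) (∑ i, .mk (c i ^ 2) (sq_nonneg _) * v i) := by
  have h_scale : (Measure.pi fun i ↦ gaussianReal (μ i) (v i)).map (fun a i ↦ a i * c i)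
      = Measure.pi fun i ↦ gaussianReal (c i * μ i) (.mk (c i ^ 2) (sq_nonneg _) * v i) := by
    simp_rw [← gaussianReal_map_mul_const]
    exact Measure.pi_map_pi (f := fun i y ↦ y * c i) fun i ↦ by fun_prop
  rw [← map_sum_pi_gaussianReal, ← h_scale, Measure.map_map (by fun_prop) (by fun_prop)]
  rfl

lemma integral_pi_sum_indicator_one {α : ι → Type*} [∀ i, MeasurableSpace (α i)]
    (P : ∀ i, Measure (α i)) [∀ i, IsProbabilityMeasure (P i)] {s : ∀ i, Set (α i)}
    (hs : ∀ i, MeasurableSet (s i)) :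
    ∫ ω, ∑ i, (s i).indicator (1 : α i → ℝ) (ω i) ∂Measure.pi P = ∑ i, (P i).real (s i) := by
  have h_int : ∀ i, Integrable ((s i).indicator (1 : α i → ℝ)) (P i) := fun i ↦
    (integrable_const (1 : ℝ)).indicator (hs i)
  rw [integral_finsetSum _ fun i _ ↦ integrable_comp_eval (h_int i)]
  exact Finset.sum_congr rfl fun i _ ↦
    (integral_comp_eval (h_int i).aestronglyMeasurable).trans (integral_indicator_one (hs i))

end ProductMeasure

section Sparsity

open Asymptotics

variable {d : ℕ} {x : Fin d → ℝ}

lemma measurePreserving_dotp (hx : unitVec x) :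
    MeasurePreserving (fun a ↦ dotp a x) (Measure.pi fun _ ↦ gaussianReal 0 1)
      (gaussianReal 0 1) := by
  refine ⟨by unfold dotp; fun_prop, ?_⟩
  have h_var : ∑ j, NNReal.mk (x j ^ 2) (sq_nonneg _) * 1 = 1 := by
    rw [← NNReal.coe_inj]
    simpa [unitVec] using hx
  have h_law := map_sum_mul_pi_gaussianReal (fun _ ↦ 0) (fun _ ↦ 1) x
  rwa [h_var, Finset.sum_eq_zero fun j _ ↦ mul_zero (x j)] at h_law

lemma integral_sum_ite_le_dotp (m : ℕ) (t : ℝ) (hx : unitVec x) :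
    ∫ ω, (∑ i, if t ≤ dotp (ω i) x then (1 : ℝ) else 0) ∂Prob d m
      = m * (gaussianReal 0 1).real (Set.Ici t) := by
  have h_dotp := measurePreserving_dotp hx
  have h_indicator (a : Fin d → ℝ) : (if t ≤ dotp a x then (1 : ℝ) else 0)
      = ((fun a ↦ dotp a x) ⁻¹' Set.Ici t).indicator 1 a := by
    simp [Set.indicator]
  simp_rw [h_indicator]
  rw [Prob, integral_pi_sum_indicator_one _ fun _ ↦ h_dotp.measurable measurableSet_Ici,
    h_dotp.measureReal_preimage measurableSet_Ici.nullMeasurableSet]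
  simp

lemma gaussianReal_real_Ici_eq_one_sub_Phi (t : ℝ) :
    (gaussianReal 0 1).real (Set.Ici t) = 1 - Phi t := by
  have := nullSingletonClass_gaussianReal (μ := 0) one_ne_zero
  rw [measureReal_congr Ioi_ae_eq_Ici.symm, ← Set.compl_Iic,
    probReal_compl_eq_one_sub measurableSet_Iic]
  rfl

variable {r : ℝ} {m : ℕ}

lemma hthr_pos (hr : 0 < r) (hm : 2 ≤ m) : 0 < hthr r m := by
  have h_log_pos : 0 < Real.log m := Real.log_pos (by exact_mod_cast hm)
  exact Real.sqrt_pos.mpr (by positivity)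

lemma tendsto_hthr_atTop (hr : 0 < r) : Tendsto (hthr r) atTop atTop :=
  Real.tendsto_sqrt_atTop.comp <|
    (Real.tendsto_log_atTop.comp tendsto_natCast_atTop_atTop).const_mul_atTop (by positivity)

lemma gaussianPDFReal_hthr (hr : 0 ≤ r) (hm : m ≠ 0) :
    gaussianPDFReal 0 1 (hthr r m) = (√(2 * Real.pi))⁻¹ * (m : ℝ) ^ (-r) := by
  have hm_pos : (0 : ℝ) < m := by positivity
  have h_sq : hthr r m ^ 2 = 2 * r * Real.log m :=
    Real.sq_sqrt (mul_nonneg (by positivity) (Real.log_natCast_nonneg m))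
  rw [gaussianPDFReal, sub_zero, h_sq, Real.rpow_def_of_pos hm_pos,
    NNReal.coe_one, mul_one, mul_one]
  ring_nf

lemma mul_gaussianPDFReal_hthr_div_hthr (hr : 0 ≤ r) (hm : m ≠ 0) :
    m * (gaussianPDFReal 0 1 (hthr r m) / hthr r m)
      = (m : ℝ) ^ (1 - r) / √(4 * Real.pi * r * Real.log m) := by
  have h_sqrt : √(4 * Real.pi * r * Real.log m) = √(2 * Real.pi) * hthr r m := by
    rw [hthr, ← Real.sqrt_mul (by positivity)]
    ring_nf
  rw [h_sqrt, gaussianPDFReal_hthr hr hm, sub_eq_add_neg,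
    Real.rpow_add (by positivity), Real.rpow_one]
  ring

lemma mul_gaussianReal_real_Ici_hthr_le (hr : 0 < r) (hm : 2 ≤ m) :
    m * (gaussianReal 0 1).real (Set.Ici (hthr r m))
      ≤ (m : ℝ) ^ (1 - r) / √(4 * Real.pi * r * Real.log m) := by
  rw [← mul_gaussianPDFReal_hthr_div_hthr hr.le (by positivity)]
  gcongr
  simpa using gaussianReal_real_Ici_le one_ne_zero (hthr_pos hr hm)

lemma isEquivalent_mul_gaussianReal_real_Ici_hthr (hr : 0 < r) :
    (fun m : ℕ ↦ m * (gaussianReal 0 1).real (Set.Ici (hthr r m)))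
      ~[atTop] fun m : ℕ ↦ (m : ℝ) ^ (1 - r) / √(4 * Real.pi * r * Real.log m) := by
  have h_tail := (isEquivalent_gaussianReal_real_Ici 0 one_ne_zero).comp_tendsto
    (tendsto_hthr_atTop hr)
  refine ((IsEquivalent.refl (u := fun m : ℕ ↦ (m : ℝ))).mul h_tail).congr_right ?_
  filter_upwards [eventually_ne_atTop 0] with m hm
  simpa using mul_gaussianPDFReal_hthr_div_hthr hr.le hm

end Sparsity

theorem stmt14_general {d : ℕ} (r : ℝ) (hr : 0 < r)
    (x : Fin d → ℝ) (hx : unitVec x) :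
    (∀ m : ℕ, 2 ≤ m →
      (∫ ω, (∑ i, if hthr r m ≤ dotp (ω i) x then (1 : ℝ) else 0) ∂(Prob d m))
          = m * (1 - Phi (Real.sqrt (2 * r * Real.log m))) ∧
      (∫ ω, (∑ i, if hthr r m ≤ dotp (ω i) x then (1 : ℝ) else 0) ∂(Prob d m))
          ≤ (m : ℝ) ^ (1 - r) / Real.sqrt (4 * Real.pi * r * Real.log m)) ∧
    Asymptotics.IsEquivalent atTop
      (fun m : ℕ => ∫ ω, (∑ i, if hthr r m ≤ dotp (ω i) x then (1 : ℝ) else 0) ∂(Prob d m))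
      (fun m : ℕ => (m : ℝ) ^ (1 - r) / Real.sqrt (4 * Real.pi * r * Real.log m)) := by
  simp_rw [integral_sum_ite_le_dotp _ _ hx]
  refine ⟨fun m hm ↦ ⟨?_, mul_gaussianReal_real_Ici_hthr_le hr hm⟩,
    isEquivalent_mul_gaussianReal_real_Ici_hthr hr⟩
  rw [gaussianReal_real_Ici_eq_one_sub_Phi, hthr]

/-- sparsity of the mapped vector: exact expectation, non-asymptotic
upper bound, and asymptotic equivalence. -/
theorem stmt14 {d : ℕ} (r : ℝ) (hr : r ∈ Set.Ioo (0 : ℝ) 1)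
    (x : Fin d → ℝ) (hx : unitVec x) :
    (∀ m : ℕ, 2 ≤ m →
      (∫ ω, (∑ i, if hthr r m ≤ dotp (ω i) x then (1 : ℝ) else 0) ∂(Prob d m))
          = m * (1 - Phi (Real.sqrt (2 * r * Real.log m))) ∧
      (∫ ω, (∑ i, if hthr r m ≤ dotp (ω i) x then (1 : ℝ) else 0) ∂(Prob d m))
          ≤ (m : ℝ) ^ (1 - r) / Real.sqrt (4 * Real.pi * r * Real.log m)) ∧
    Asymptotics.IsEquivalent atTop
      (fun m : ℕ => ∫ ω, (∑ i, if hthr r m ≤ dotp (ω i) x then (1 : ℝ) else 0) ∂(Prob d m))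
      (fun m : ℕ => (m : ℝ) ^ (1 - r) / Real.sqrt (4 * Real.pi * r * Real.log m)) :=
  stmt14_general r hr.1 x hx

end
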